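/- Let ℓ ∈ 𝕃_∞, ν ∈ (0,1], suppose γ := max_{‖λ‖₁=1} min_i (−(Aλ)_i) > 0, and let {λ_t} be boosting iterates with steps α_i = α_qub_i := ν·γ_i/C_i⁴. Let t > t₀ ≥ 0 with t ≥ 2C₁⁶·ln(m)/(γ²·ν(2−ν)). Then the margin satisfies M(Aλ_t) := min_{k∈[m]} (−(Aλ_t)_k)/‖λ_t‖₁ ≥ γ·(2−ν)/(2·C_{t₀+1}⁶) − ln(c₀)/(t·ν·γ), where c₀ := max{1, m·C_{t₀+1}·L(Aλ_{t₀})·exp((ν(2−ν)/(2·C_{t₀+1}⁶))·Σ_{i=1}^{t₀} γ_i²)}. -/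

import Mathlib

open Real Finset

noncomputable section

/-- The property that `C` is a valid curvature constant at level `z`:
`C ≥ 1` and `C⁻¹ ≤ eˣ / ℓ⁽ⁱ⁾(x) ≤ C` for all `x ≤ z` and `i ∈ {0,1,2}`. -/
def CBound (ℓ : ℝ → ℝ) (z C : ℝ) : Prop :=
  1 ≤ C ∧ ∀ x ≤ z, ∀ i ≤ 2,
    C⁻¹ ≤ Real.exp x / iteratedDeriv i ℓ x ∧ Real.exp x / iteratedDeriv i ℓ x ≤ C

/-- `C_ℓ(z)`: the least valid curvature constant at level `z`. -/
def Cconst (ℓ : ℝ → ℝ) (z : ℝ) : ℝ := sInf {C : ℝ | CBound ℓ z C}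

/-- Membership in the class `𝕃`: positive, twice continuously differentiable,
strictly convex, and `C_ℓ(z) < ∞` (i.e. some valid constant exists) for every `z`. -/
def MemL (ℓ : ℝ → ℝ) : Prop :=
  (∀ x, 0 < ℓ x) ∧ ContDiff ℝ 2 ℓ ∧ StrictConvexOn ℝ Set.univ ℓ ∧
    ∀ z : ℝ, ∃ C : ℝ, CBound ℓ z C

/-- Membership in `𝕃_∞`: in `𝕃` and moreover `C_ℓ(z) → 1` as `z → −∞`. -/
def MemLinf (ℓ : ℝ → ℝ) : Prop :=
  MemL ℓ ∧ Filter.Tendsto (Cconst ℓ) Filter.atBot (nhds 1)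

variable {m n : ℕ}

/-- The empirical risk `L(Aλ) = (1/m) Σᵢ ℓ((Aλ)ᵢ)`. -/
def LL (ℓ : ℝ → ℝ) (A : Matrix (Fin m) (Fin n) ℝ) (lam : Fin n → ℝ) : ℝ :=
  (∑ i, ℓ (A.mulVec lam i)) / m

/-- The gradient vector `∇L(Aλ)`, with `i`-th entry `ℓ'((Aλ)ᵢ)/m`. -/
def gradL (ℓ : ℝ → ℝ) (A : Matrix (Fin m) (Fin n) ℝ) (lam : Fin n → ℝ) : Fin m → ℝ :=
  fun i => deriv ℓ (A.mulVec lam i) / m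

/-- `‖Aᵀ ∇L(Aλ)‖_∞`. -/
def gInf (ℓ : ℝ → ℝ) (A : Matrix (Fin m) (Fin n) ℝ) (lam : Fin n → ℝ) : ℝ :=
  ⨆ j : Fin n, |∑ i, gradL ℓ A lam i * A i j|

/-- `‖∇L(Aλ)‖₁`. -/
def gOne (ℓ : ℝ → ℝ) (A : Matrix (Fin m) (Fin n) ℝ) (lam : Fin n → ℝ) : ℝ :=
  ∑ i, |gradL ℓ A lam i|

/-- `γ̂ = ‖Aᵀ∇L(Aλ)‖_∞ / ‖∇L(Aλ)‖₁`. -/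
def gammaHat (ℓ : ℝ → ℝ) (A : Matrix (Fin m) (Fin n) ℝ) (lam : Fin n → ℝ) : ℝ :=
  gInf ℓ A lam / gOne ℓ A lam

/-- `C = C_ℓ(ℓ⁻¹(m · L(Aλ)))`. -/
def Cstep (ℓ : ℝ → ℝ) (A : Matrix (Fin m) (Fin n) ℝ) (lam : Fin n → ℝ) : ℝ :=
  Cconst ℓ (Function.invFun ℓ ((m : ℝ) * LL ℓ A lam))

/-- The (minimum `l¹`) margin `M(Aλ) = min_k (−(Aλ)_k) / ‖λ‖₁`. -/
def margin (A : Matrix (Fin m) (Fin n) ℝ) (lam : Fin n → ℝ) : ℝ :=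
  ⨅ k : Fin m, (-(A.mulVec lam k)) / (∑ j, |lam j|)

/-- The maximum margin `γ = max_{‖λ‖₁=1} min_i (−(Aλ)ᵢ)`. -/
def gammaMax (A : Matrix (Fin m) (Fin n) ℝ) : ℝ :=
  sSup {r : ℝ | ∃ lam : Fin n → ℝ, (∑ j, |lam j|) = 1 ∧ r = ⨅ i : Fin m, -(A.mulVec lam i)}

/-- Boosting iterates: `λ₀ = 0`, `λ_t = λ_{t-1} + α_t • v_t` where `v_t` is a signed
standard basis vector satisfying `∇L(Aλ_{t-1})ᵀ A v_t = −‖Aᵀ∇L(Aλ_{t-1})‖_∞`. -/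
def IsBoostSeq (ℓ : ℝ → ℝ) (A : Matrix (Fin m) (Fin n) ℝ)
    (lam : ℕ → Fin n → ℝ) (α : ℕ → ℝ) (v : ℕ → Fin n → ℝ) : Prop :=
  lam 0 = 0 ∧
  (∀ t : ℕ, 1 ≤ t → lam t = lam (t-1) + α t • v t) ∧
  (∀ t : ℕ, 1 ≤ t → ∃ s : ℝ, (s = 1 ∨ s = -1) ∧ ∃ j : Fin n, v t = s • (Pi.single j (1:ℝ) : Fin n → ℝ)) ∧
  (∀ t : ℕ, 1 ≤ t →
    ∑ i, gradL ℓ A (lam (t-1)) i * A.mulVec (v t) i = - gInf ℓ A (lam (t-1)))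

/-- The quantity `Υ_ν(γ)`. -/
def Upsilon (ν γ : ℝ) : ℝ :=
  ((2/ν) * Real.log 2 - (2/ν) * Real.log ((1+γ) ^ (1-ν) + (1-γ) ^ (1-ν))
      - Real.log (1-γ^2)) /
    (Real.log (1+γ) - Real.log (1-γ))

/-!
As long as the risk does not exceed its value at the start of a step, all coordinates of `Aλ` stay
below `ℓ⁻¹(m L)`, where `C` compares `ℓ`, `ℓ'` and `ℓ''` with one another. This yields a quadratic
upper bound along the step, and the bound itself keeps the risk from returning to its initial value
before the end of the step. Hence step `k` shrinks the risk by the factor `1 - κ γ̂²`, where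
`κ = ν (2 - ν) / (2 C⁶)` only grows with `k` because `C` decreases along with the risk.

Let `P` and `Q` be the sums of `γ̂²` and `γ̂` over the first `t` steps. Since
`exp ((Aλ)ᵢ) ≤ m C L(Aλ)`, the decay after `t₀` gives `-(Aλ_t)ᵢ ≥ κ P - ln c₀`, whereas
`‖λ_t‖₁ ≤ ν Q`. Weak duality gives `γ ≤ γ̂`, so `P ≥ γ Q` and `Q ≥ t γ`, and dividing yields the
margin bound when it is positive. Otherwise it suffices that all `-(Aλ_t)ᵢ` are nonnegative, and
the lower bound on `t` ensures `m L(Aλ_t) ≤ ℓ 0`.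
-/

section Calculus

variable {f f' f'' : ℝ → ℝ} {a b K : ℝ}

lemma le_quadratic_of_hasDerivAt_of_deriv2_le (hab : a ≤ b)
    (hf : ∀ u ∈ Set.Icc a b, HasDerivAt f (f' u) u)
    (hf' : ∀ u ∈ Set.Icc a b, HasDerivAt f' (f'' u) u) (hK : ∀ u ∈ Set.Ico a b, f'' u ≤ K) :
    f b ≤ f a + f' a * (b - a) + K * (b - a) ^ 2 / 2 := by
  have slope_le : ∀ u ∈ Set.Icc a b, f' u ≤ f' a + K * (u - a) :=
    image_le_of_deriv_right_le_deriv_boundary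
      (fun u hu => (hf' u hu).continuousAt.continuousWithinAt)
      (fun u hu => (hf' u (Set.Ico_subset_Icc_self hu)).hasDerivWithinAt) (by simp) (by fun_prop)
      (fun u _ => by
        simpa using ((((hasDerivAt_id u).sub_const a).const_mul K).const_add
          (f' a)).hasDerivWithinAt)
      hK
  refine image_le_of_deriv_right_le_deriv_boundary
    (B := fun u => f a + f' a * (u - a) + K * (u - a) ^ 2 / 2)
    (fun u hu => (hf u hu).continuousAt.continuousWithinAt)
    (fun u hu => (hf u (Set.Ico_subset_Icc_self hu)).hasDerivWithinAt) (by simp) (by fun_prop)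
    (fun u _ => ?_) (fun u hu => slope_le u (Set.Ico_subset_Icc_self hu)) ⟨hab, le_rfl⟩
  have linear := (((hasDerivAt_id u).sub_const a).const_mul (f' a)).const_add (f a)
  have quadratic := ((((hasDerivAt_id u).sub_const a).pow 2).const_mul K).div_const 2
  refine ((linear.add quadratic).congr_deriv ?_).hasDerivWithinAt
  simp
  ring

lemma eventually_lt_nhdsGT_of_hasDerivAt_neg (hf : HasDerivAt f (f' a) a) (hneg : f' a < 0) :
    ∀ᶠ u in nhdsWithin a (Set.Ioi a), f u < f a := by
  filter_upwards [hf.hasDerivWithinAt.limsup_slope_le' Set.self_notMem_Ioi hneg,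
    self_mem_nhdsWithin] with u hslope hu
  rw [slope_def_field, div_neg_iff] at hslope
  grind

lemma exists_first_return (hab : a < b) (hf : ContinuousOn f (Set.Icc a b))
    (hlt : ∀ᶠ u in nhdsWithin a (Set.Ioi a), f u < f a) (hb : f a ≤ f b) :
    ∃ c ∈ Set.Ioc a b, f a ≤ f c ∧ ∀ u ∈ Set.Ioo a c, f u < f a := by
  obtain ⟨ε, hε, hltε⟩ := mem_nhdsGT_iff_exists_Ioo_subset.1 hlt
  have hεb : ε ≤ b := le_of_not_gt fun h => (hltε ⟨hab, h⟩).not_ge hb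
  have hclosed : IsClosed (Set.Icc ε b ∩ f ⁻¹' Set.Ici (f a)) :=
    (hf.mono (Set.Icc_subset_Icc_left (le_of_lt hε))).preimage_isClosed_of_isClosed
      isClosed_Icc isClosed_Ici
  obtain ⟨c, ⟨hc, hfc⟩, hleast⟩ :=
    (isCompact_Icc.of_isClosed_subset hclosed Set.inter_subset_left).exists_isLeast
      ⟨b, ⟨hεb, le_rfl⟩, hb⟩
  refine ⟨c, ⟨lt_of_lt_of_le hε hc.1, hc.2⟩, hfc, fun u hu => ?_⟩
  rcases lt_or_ge u ε with huε | huε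
  · exact hltε ⟨hu.1, huε⟩
  · exact lt_of_not_ge fun hfu => (hleast ⟨⟨huε, hu.2.le.trans hc.2⟩, hfu⟩).not_gt hu.2

lemma lt_of_deriv2_le_on_sublevel (hab : a < b)
    (hf : ∀ u ∈ Set.Icc a b, HasDerivAt f (f' u) u)
    (hf' : ∀ u ∈ Set.Icc a b, HasDerivAt f' (f'' u) u) (hK₀ : 0 ≤ K)
    (hK : ∀ u ∈ Set.Ico a b, f u ≤ f a → f'' u ≤ K) (hslope : f' a + K * (b - a) / 2 < 0) :
    f b < f a := by
  have ha : a ∈ Set.Icc a b := Set.left_mem_Icc.2 hab.le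
  by_contra! hb
  obtain ⟨c, ⟨hac, hcb⟩, hfc, hlt⟩ := exists_first_return hab
    (fun u hu => (hf u hu).continuousAt.continuousWithinAt)
    (eventually_lt_nhdsGT_of_hasDerivAt_neg (hf a ha) (by nlinarith)) hb
  have hsub : Set.Icc a c ⊆ Set.Icc a b := Set.Icc_subset_Icc_right hcb
  have htaylor := le_quadratic_of_hasDerivAt_of_deriv2_le hac.le
    (fun u hu => hf u (hsub hu)) (fun u hu => hf' u (hsub hu))
    fun u hu => hK u ⟨hu.1, hu.2.trans_le hcb⟩ <| by
      rcases hu.1.eq_or_lt with rfl | hau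
      exacts [le_rfl, (hlt u ⟨hau, hu.2⟩).le]
  have hslope_c : f' a + K * (c - a) / 2 < 0 := hslope.trans_le' (by gcongr)
  nlinarith [mul_neg_of_pos_of_neg (sub_pos.2 hac) hslope_c]

lemma le_quadratic_of_deriv2_le_on_sublevel (hab : a ≤ b)
    (hf : ∀ u ∈ Set.Icc a b, HasDerivAt f (f' u) u)
    (hf' : ∀ u ∈ Set.Icc a b, HasDerivAt f' (f'' u) u) (hK₀ : 0 ≤ K)
    (hK : ∀ u ∈ Set.Ico a b, f u ≤ f a → f'' u ≤ K) (hslope : f' a + K * (b - a) / 2 < 0) :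
    f b ≤ f a + f' a * (b - a) + K * (b - a) ^ 2 / 2 := by
  refine le_quadratic_of_hasDerivAt_of_deriv2_le hab hf hf' fun u hu => hK u hu ?_
  rcases hu.1.eq_or_lt with rfl | hau
  · rfl
  have hsub : Set.Icc a u ⊆ Set.Icc a b := Set.Icc_subset_Icc_right hu.2.le
  have hslope_u : f' a + K * (u - a) / 2 < 0 := hslope.trans_le' (by gcongr; exact hu.2.le)
  exact (lt_of_deriv2_le_on_sublevel hau (fun v hv => hf v (hsub hv)) (fun v hv => hf' v (hsub hv))
    hK₀ (fun v hv => hK v ⟨hv.1, hv.2.trans hu.2⟩) hslope_u).le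

end Calculus

section Sums

lemma sum_Icc_one_sub_one {M : Type*} [AddCommMonoid M] (f : ℕ → M) (k : ℕ) :
    ∑ i ∈ Icc 1 k, f (i - 1) = ∑ i ∈ range k, f i := by
  rw [← Ico_add_one_right_eq_Icc, sum_Ico_eq_sum_range]
  simp

lemma le_mul_exp_neg_sum {S a : ℕ → ℝ} {t₀ t : ℕ} (hS : ∀ k, 0 ≤ S k)
    (hstep : ∀ k ≥ t₀, S (k + 1) ≤ (1 - a k) * S k) (ht : t₀ ≤ t) :
    S t ≤ S t₀ * exp (-∑ k ∈ Ico t₀ t, a k) := by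
  have hexp : ∀ k ≥ t₀, S (k + 1) ≤ exp (-a k) * S k + 0 := fun k hk => by
    rw [add_zero]
    exact (hstep k hk).trans (mul_le_mul_of_nonneg_right (one_sub_le_exp_neg _) (hS k))
  simpa [← sum_neg_distrib, exp_sum] using
    discrete_gronwall_prod_general hexp (fun k _ => (exp_pos _).le) ht

lemma mul_le_mul_sum_sq_sub {ι : Type*} {s : Finset ι} {g : ι → ℝ} {γ κ ν c N : ℝ}
    (hs : s.Nonempty) (hg : ∀ k ∈ s, γ ≤ g k) (hγ : 0 < γ) (hκ : 0 ≤ κ) (hν : 0 < ν)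
    (hc : 0 ≤ c) (hN : N ≤ ν * ∑ k ∈ s, g k)
    (hr : 0 ≤ γ * (κ / ν) - c / (#s * ν * γ)) :
    (γ * (κ / ν) - c / (#s * ν * γ)) * N ≤ κ * ∑ k ∈ s, g k ^ 2 - c := by
  have hsum : #s * γ ≤ ∑ k ∈ s, g k := by simpa using card_nsmul_le_sum s g γ hg
  have hsum_sq : γ * ∑ k ∈ s, g k ≤ ∑ k ∈ s, g k ^ 2 := by
    rw [mul_sum]
    refine sum_le_sum fun k hk => ?_
    rw [sq]
    exact mul_le_mul_of_nonneg_right (hg k hk) (hγ.le.trans (hg k hk))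
  calc (γ * (κ / ν) - c / (#s * ν * γ)) * N
      ≤ (γ * (κ / ν) - c / (#s * ν * γ)) * (ν * ∑ k ∈ s, g k) :=
        mul_le_mul_of_nonneg_left hN hr
    _ = κ * (γ * ∑ k ∈ s, g k) - c * ((∑ k ∈ s, g k) / (#s * γ)) := by field_simp
    _ ≤ κ * ∑ k ∈ s, g k ^ 2 - c * 1 := by
        gcongr
        exact (one_le_div (by positivity)).2 hsum
    _ = κ * ∑ k ∈ s, g k ^ 2 - c := by rw [mul_one]

end Sums

namespace CBound

variable {ℓ : ℝ → ℝ} {z z₁ C t : ℝ} {i j : ℕ}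

lemma pos (h : CBound ℓ z C) : 0 < C := zero_lt_one.trans_le h.1

lemma iteratedDeriv_pos (h : CBound ℓ z C) (ht : t ≤ z) (hi : i ≤ 2) :
    0 < iteratedDeriv i ℓ t :=
  (div_pos_iff_of_pos_left (exp_pos t)).1 ((inv_pos.2 h.pos).trans_le (h.2 t ht i hi).1)

lemma exp_le_mul_iteratedDeriv (h : CBound ℓ z C) (ht : t ≤ z) (hi : i ≤ 2) :
    exp t ≤ C * iteratedDeriv i ℓ t :=
  (div_le_iff₀ (h.iteratedDeriv_pos ht hi)).1 (h.2 t ht i hi).2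

lemma iteratedDeriv_le_mul_exp (h : CBound ℓ z C) (ht : t ≤ z) (hi : i ≤ 2) :
    iteratedDeriv i ℓ t ≤ C * exp t :=
  (inv_mul_le_iff₀ h.pos).1 ((le_div_iff₀ (h.iteratedDeriv_pos ht hi)).1 (h.2 t ht i hi).1)

lemma iteratedDeriv_le_sq_mul_iteratedDeriv (h : CBound ℓ z C) (ht : t ≤ z) (hi : i ≤ 2)
    (hj : j ≤ 2) : iteratedDeriv i ℓ t ≤ C ^ 2 * iteratedDeriv j ℓ t :=
  calc iteratedDeriv i ℓ t ≤ C * exp t := h.iteratedDeriv_le_mul_exp ht hi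
    _ ≤ C * (C * iteratedDeriv j ℓ t) :=
        mul_le_mul_of_nonneg_left (h.exp_le_mul_iteratedDeriv ht hj) h.pos.le
    _ = C ^ 2 * iteratedDeriv j ℓ t := by ring

lemma mono (h : CBound ℓ z C) (hz : z₁ ≤ z) : CBound ℓ z₁ C :=
  ⟨h.1, fun t ht => h.2 t (ht.trans hz)⟩

lemma cconst_le (h : CBound ℓ z C) : Cconst ℓ z ≤ C :=
  csInf_le ⟨1, fun _ hC => hC.1⟩ h

lemma cbound_cconst (h : CBound ℓ z C) : CBound ℓ z (Cconst ℓ z) := by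
  have hne : {C : ℝ | CBound ℓ z C}.Nonempty := ⟨C, h⟩
  have one_le : 1 ≤ Cconst ℓ z := le_csInf hne fun _ hC => hC.1
  refine ⟨one_le, fun t ht i hi => ⟨?_, le_csInf hne fun D hD => (hD.2 t ht i hi).2⟩⟩
  have hratio : 0 < exp t / iteratedDeriv i ℓ t :=
    div_pos (exp_pos t) (h.iteratedDeriv_pos ht hi)
  rw [inv_le_comm₀ (zero_lt_one.trans_le one_le) hratio]
  exact le_csInf hne fun D hD => (inv_le_comm₀ hD.pos hratio).1 (hD.2 t ht i hi).1

variable {ι : Type*} [Fintype ι] {x w : ι → ℝ}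

lemma sum_le_sq_mul_sum_deriv (h : CBound ℓ z C)
    (hx : ∀ i, x i ≤ z) : ∑ i, ℓ (x i) ≤ C ^ 2 * ∑ i, deriv ℓ (x i) := by
  rw [mul_sum]
  refine sum_le_sum fun i _ => ?_
  simpa using h.iteratedDeriv_le_sq_mul_iteratedDeriv (hx i) zero_le_two one_le_two

lemma sum_iteratedDeriv_two_mul_sq_le (h : CBound ℓ z C)
    (hx : ∀ i, x i ≤ z) (hw : ∀ i, |w i| ≤ 1) :
    ∑ i, iteratedDeriv 2 ℓ (x i) * w i ^ 2 ≤ C ^ 2 * ∑ i, ℓ (x i) := by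
  rw [mul_sum]
  refine sum_le_sum fun i _ => ?_
  calc iteratedDeriv 2 ℓ (x i) * w i ^ 2 ≤ iteratedDeriv 2 ℓ (x i) :=
        mul_le_of_le_one_right (h.iteratedDeriv_pos (hx i) le_rfl).le
          ((sq_le_one_iff_abs_le_one (w i)).2 (hw i))
    _ ≤ C ^ 2 * ℓ (x i) := by
        simpa using h.iteratedDeriv_le_sq_mul_iteratedDeriv (hx i) le_rfl zero_le_two

end CBound

namespace MemL

variable {ℓ : ℝ → ℝ}

lemma cbound_cconst (h : MemL ℓ) (z : ℝ) : CBound ℓ z (Cconst ℓ z) :=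
  (h.2.2.2 z).choose_spec.cbound_cconst

lemma monotone_cconst (h : MemL ℓ) : Monotone (Cconst ℓ) := fun _ z hz =>
  ((h.cbound_cconst z).mono hz).cconst_le

lemma deriv_pos (h : MemL ℓ) (x : ℝ) : 0 < deriv ℓ x := by
  simpa using (h.cbound_cconst x).iteratedDeriv_pos le_rfl (i := 1) (by norm_num)

lemma strictMono (h : MemL ℓ) : StrictMono ℓ := strictMono_of_deriv_pos h.deriv_pos

lemma hasDerivAt (h : MemL ℓ) (x : ℝ) : HasDerivAt ℓ (deriv ℓ x) x :=
  (h.2.1.differentiable (by norm_num) x).hasDerivAt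

lemma hasDerivAt_deriv (h : MemL ℓ) (x : ℝ) :
    HasDerivAt (deriv ℓ) (iteratedDeriv 2 ℓ x) x := by
  have hdiff : Differentiable ℝ (iteratedDeriv 1 ℓ) :=
    h.2.1.differentiable_iteratedDeriv 1 (by norm_num)
  simpa [iteratedDeriv_succ] using (hdiff x).hasDerivAt

lemma tendsto_atBot (h : MemL ℓ) : Filter.Tendsto ℓ Filter.atBot (nhds 0) := by
  have hexp : Filter.Tendsto (fun x => Cconst ℓ 0 * exp x) Filter.atBot (nhds 0) := by
    simpa using tendsto_exp_atBot.const_mul (Cconst ℓ 0)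
  refine squeeze_zero' (.of_forall fun x => (h.1 x).le) ?_ hexp
  filter_upwards [Filter.eventually_le_atBot 0] with x hx
  simpa using (h.cbound_cconst 0).iteratedDeriv_le_mul_exp hx (i := 0) (by norm_num)

lemma tendsto_atTop (h : MemL ℓ) : Filter.Tendsto ℓ Filter.atTop Filter.atTop := by
  have htangent : Filter.Tendsto (fun x => deriv ℓ 0 * x + ℓ 0) Filter.atTop Filter.atTop :=
    Filter.tendsto_atTop_add_const_right _ _ (Filter.tendsto_id.const_mul_atTop (h.deriv_pos 0))
  refine Filter.tendsto_atTop_mono' _ ?_ htangent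
  filter_upwards [Filter.eventually_gt_atTop 0] with x hx
  have hslope := h.2.2.1.convexOn.le_slope_of_hasDerivAt (Set.mem_univ 0) (Set.mem_univ x) hx
    (h.hasDerivAt 0)
  rw [slope_def_field, sub_zero, le_div_iff₀ hx] at hslope
  linarith

lemma apply_invFun (h : MemL ℓ) {y : ℝ} (hy : 0 < y) : ℓ (Function.invFun ℓ y) = y := by
  obtain ⟨a, ha⟩ := (h.tendsto_atBot.eventually_le_const hy).exists
  obtain ⟨b, hb⟩ := (h.tendsto_atTop.eventually_ge_atTop y).exists
  exact Function.invFun_eq (mem_range_of_exists_le_of_exists_ge h.2.1.continuous ⟨a, ha⟩ ⟨b, hb⟩)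

variable {ι : Type*} [Fintype ι] {x w : ι → ℝ} {z C s g ν : ℝ}

lemma le_of_sum_le (h : MemL ℓ) (hz : ∑ i, ℓ (x i) ≤ ℓ z) (i : ι) : x i ≤ z :=
  h.strictMono.le_iff_le.1 <|
    (single_le_sum (fun j _ => (h.1 (x j)).le) (mem_univ i)).trans hz

lemma sum_add_mul_le_quadratic (h : MemL ℓ) (hw : ∀ i, |w i| ≤ 1)
    (hz : ∑ i, ℓ (x i) ≤ ℓ z) (hC : CBound ℓ z C) (hs : 0 ≤ s)
    (hslope : ∑ i, deriv ℓ (x i) * w i + C ^ 2 * (∑ i, ℓ (x i)) * s / 2 < 0) :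
    ∑ i, ℓ (x i + s * w i) ≤ ∑ i, ℓ (x i) + (∑ i, deriv ℓ (x i) * w i) * s
      + C ^ 2 * (∑ i, ℓ (x i)) * s ^ 2 / 2 := by
  have hline (i : ι) (u : ℝ) : HasDerivAt (fun s => x i + s * w i) (w i) u := by
    simpa using ((hasDerivAt_id u).mul_const (w i)).const_add (x i)
  have hderiv (u : ℝ) : HasDerivAt (fun s => ∑ i, ℓ (x i + s * w i))
      (∑ i, deriv ℓ (x i + u * w i) * w i) u :=
    HasDerivAt.fun_sum fun i _ => (h.hasDerivAt _).comp u (hline i u)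
  have hderiv₂ (u : ℝ) : HasDerivAt (fun s => ∑ i, deriv ℓ (x i + s * w i) * w i)
      (∑ i, iteratedDeriv 2 ℓ (x i + u * w i) * w i ^ 2) u := by
    simp only [sq, ← mul_assoc]
    exact HasDerivAt.fun_sum fun i _ => ((h.hasDerivAt_deriv _).comp u (hline i u)).mul_const _
  have hquad := le_quadratic_of_deriv2_le_on_sublevel hs (fun u _ => hderiv u)
    (fun u _ => hderiv₂ u) (K := C ^ 2 * ∑ i, ℓ (x i))
    (mul_nonneg (sq_nonneg C) (sum_nonneg fun i _ => (h.1 _).le))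
    (fun u _ hu => by
      simp only [zero_mul, add_zero] at hu
      exact (hC.sum_iteratedDeriv_two_mul_sq_le (h.le_of_sum_le (hu.trans hz)) hw).trans
        (mul_le_mul_of_nonneg_left hu (sq_nonneg C)))
    (by simpa using hslope)
  simpa using hquad

lemma sum_add_qub_step_le [Nonempty ι] (h : MemL ℓ) (hw : ∀ i, |w i| ≤ 1)
    (hz : ∑ i, ℓ (x i) ≤ ℓ z) (hC : CBound ℓ z C) (hν : ν ∈ Set.Ioo 0 2) (hg : 0 < g)
    (hslope : ∑ i, deriv ℓ (x i) * w i = -(g * ∑ i, deriv ℓ (x i))) :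
    ∑ i, ℓ (x i + ν * (g / C ^ 4) * w i) ≤
      (1 - ν * (2 - ν) / (2 * C ^ 6) * g ^ 2) * ∑ i, ℓ (x i) := by
  obtain ⟨hν₀, hν₂⟩ := hν
  have hC₀ := hC.pos
  set s := ν * (g / C ^ 4) with hs
  set F := ∑ i, ℓ (x i)
  set G := ∑ i, deriv ℓ (x i)
  have hG : 0 < G := sum_pos (fun i _ => h.deriv_pos (x i)) univ_nonempty
  have hFG : F ≤ C ^ 2 * G := hC.sum_le_sq_mul_sum_deriv (h.le_of_sum_le hz)
  have hs₀ : 0 < s := by positivity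
  have hcurv : C ^ 2 * F * s ≤ ν * g * G :=
    calc C ^ 2 * F * s ≤ C ^ 2 * (C ^ 2 * G) * s := by gcongr
      _ = ν * g * G := by rw [hs]; field_simp
  have hquad := h.sum_add_mul_le_quadratic hw hz hC hs₀.le <| by
    rw [hslope]
    nlinarith [mul_pos (mul_pos hg hG) (sub_pos.2 hν₂)]
  rw [hslope] at hquad
  calc ∑ i, ℓ (x i + s * w i) ≤ F + -(g * G) * s + C ^ 2 * F * s * s / 2 := by
        linear_combination hquad
    _ ≤ F + -(g * G) * s + ν * g * G * s / 2 := by gcongr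
    _ = F - ν * (2 - ν) / (2 * C ^ 6) * g ^ 2 * (C ^ 2 * G) := by
        rw [hs]; field_simp; ring
    _ ≤ F - ν * (2 - ν) / (2 * C ^ 6) * g ^ 2 * F := by
        have := sub_pos.2 hν₂
        gcongr
    _ = (1 - ν * (2 - ν) / (2 * C ^ 6) * g ^ 2) * F := by ring

end MemL

section Matrix

variable {ι κ : Type*} [Fintype κ] (A : Matrix ι κ ℝ)

lemma abs_mulVec_le {c : ℝ} {i : ι} (hA : ∀ j, |A i j| ≤ c) (v : κ → ℝ) :
    |A.mulVec v i| ≤ c * ∑ j, |v j| := by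
  rw [mul_sum]
  refine (abs_sum_le_sum_abs _ _).trans (sum_le_sum fun j _ => ?_)
  rw [abs_mul]
  exact mul_le_mul_of_nonneg_right (hA j) (abs_nonneg _)

lemma iInf_neg_mulVec_mul_sum_le [Fintype ι] {p : ι → ℝ} (hp : ∀ i, 0 ≤ p i) (μ : κ → ℝ) :
    (⨅ i, -A.mulVec μ i) * ∑ i, p i ≤ (∑ j, |μ j|) * ⨆ j, |∑ i, p i * A i j| := by
  calc (⨅ i, -A.mulVec μ i) * ∑ i, p i ≤ ∑ i, p i * -A.mulVec μ i := by
        rw [mul_comm, sum_mul]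
        exact sum_le_sum fun i _ =>
          mul_le_mul_of_nonneg_left (ciInf_le (Set.finite_range _).bddBelow i) (hp i)
    _ = ∑ j, -μ j * ∑ i, p i * A i j := by
        simp only [Matrix.mulVec, dotProduct, ← sum_neg_distrib, mul_sum]
        rw [sum_comm]
        exact sum_congr rfl fun j _ => sum_congr rfl fun i _ => by ring
    _ ≤ ∑ j, |μ j| * ⨆ j, |∑ i, p i * A i j| := by
        refine sum_le_sum fun j _ => (le_abs_self _).trans ?_
        rw [abs_mul, abs_neg]
        exact mul_le_mul_of_nonneg_left
          (le_ciSup (f := fun j => |∑ i, p i * A i j|) (Set.finite_range _).bddAbove j)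
          (abs_nonneg _)
    _ = (∑ j, |μ j|) * ⨆ j, |∑ i, p i * A i j| := (sum_mul ..).symm

end Matrix

section Risk

variable {ℓ : ℝ → ℝ} {A : Matrix (Fin m) (Fin n) ℝ}

lemma natCast_mul_ll (ℓ : ℝ → ℝ) (A : Matrix (Fin m) (Fin n) ℝ) (lam : Fin n → ℝ) :
    m * LL ℓ A lam = ∑ i, ℓ (A.mulVec lam i) := by
  rcases eq_or_ne m 0 with rfl | hm
  · simp
  · exact mul_div_cancel₀ _ (Nat.cast_ne_zero.2 hm)

lemma MemL.ll_pos [NeZero m] (h : MemL ℓ) (A : Matrix (Fin m) (Fin n) ℝ) (lam : Fin n → ℝ) :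
    0 < LL ℓ A lam :=
  div_pos (sum_pos (fun _ _ => h.1 _) univ_nonempty) (Nat.cast_pos.2 (NeZero.pos m))

lemma ll_zero [NeZero m] (ℓ : ℝ → ℝ) (A : Matrix (Fin m) (Fin n) ℝ) : LL ℓ A 0 = ℓ 0 := by
  simp [LL, mul_div_cancel_left₀ (ℓ 0) (Nat.cast_ne_zero.2 (NeZero.ne m))]

lemma MemL.apply_mulVec_le (h : MemL ℓ) (A : Matrix (Fin m) (Fin n) ℝ) (lam : Fin n → ℝ)
    (i : Fin m) : ℓ (A.mulVec lam i) ≤ m * LL ℓ A lam := by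
  rw [natCast_mul_ll]
  exact single_le_sum (fun j _ => (h.1 (A.mulVec lam j)).le) (mem_univ i)

lemma MemL.apply_invFun_ll [NeZero m] (h : MemL ℓ) (A : Matrix (Fin m) (Fin n) ℝ)
    (lam : Fin n → ℝ) : ℓ (Function.invFun ℓ (m * LL ℓ A lam)) = m * LL ℓ A lam :=
  h.apply_invFun (mul_pos (Nat.cast_pos.2 (NeZero.pos m)) (h.ll_pos A lam))

lemma MemL.cbound_cstep (h : MemL ℓ) (A : Matrix (Fin m) (Fin n) ℝ) (lam : Fin n → ℝ) :
    CBound ℓ (Function.invFun ℓ (m * LL ℓ A lam)) (Cstep ℓ A lam) := h.cbound_cconst _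

lemma MemL.cstep_le_cstep [NeZero m] (h : MemL ℓ) {lam μ : Fin n → ℝ}
    (hle : LL ℓ A lam ≤ LL ℓ A μ) : Cstep ℓ A lam ≤ Cstep ℓ A μ := by
  refine h.monotone_cconst (h.strictMono.le_iff_le.1 ?_)
  rw [h.apply_invFun_ll, h.apply_invFun_ll]
  gcongr

lemma MemL.exp_mulVec_le [NeZero m] (h : MemL ℓ) {lam μ : Fin n → ℝ}
    (hle : LL ℓ A lam ≤ LL ℓ A μ) (i : Fin m) :
    exp (A.mulVec lam i) ≤ m * Cstep ℓ A μ * LL ℓ A lam := by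
  have hlevel : A.mulVec lam i ≤ Function.invFun ℓ (m * LL ℓ A μ) := by
    rw [← h.strictMono.le_iff_le, h.apply_invFun_ll]
    exact (h.apply_mulVec_le A lam i).trans (by gcongr)
  calc exp (A.mulVec lam i) ≤ Cstep ℓ A μ * ℓ (A.mulVec lam i) := by
        simpa using (h.cbound_cstep A μ).exp_le_mul_iteratedDeriv hlevel zero_le_two
    _ ≤ Cstep ℓ A μ * (m * LL ℓ A lam) :=
        mul_le_mul_of_nonneg_left (h.apply_mulVec_le A lam i) (h.cbound_cstep A μ).pos.le
    _ = m * Cstep ℓ A μ * LL ℓ A lam := by ring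

lemma MemL.gradL_nonneg (h : MemL ℓ) (A : Matrix (Fin m) (Fin n) ℝ) (lam : Fin n → ℝ)
    (i : Fin m) : 0 ≤ gradL ℓ A lam i :=
  div_nonneg (h.deriv_pos _).le (Nat.cast_nonneg m)

lemma MemL.gOne_eq_sum_gradL (h : MemL ℓ) (A : Matrix (Fin m) (Fin n) ℝ) (lam : Fin n → ℝ) :
    gOne ℓ A lam = ∑ i, gradL ℓ A lam i :=
  sum_congr rfl fun i _ => abs_of_nonneg (h.gradL_nonneg A lam i)

lemma MemL.gOne_pos [NeZero m] (h : MemL ℓ) (A : Matrix (Fin m) (Fin n) ℝ) (lam : Fin n → ℝ) :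
    0 < gOne ℓ A lam := by
  rw [h.gOne_eq_sum_gradL]
  exact sum_pos (fun i _ => div_pos (h.deriv_pos _) (Nat.cast_pos.2 (NeZero.pos m)))
    univ_nonempty

lemma MemL.gammaMax_le_gammaHat [NeZero m] (h : MemL ℓ) (A : Matrix (Fin m) (Fin n) ℝ)
    (lam : Fin n → ℝ) : gammaMax A ≤ gammaHat ℓ A lam := by
  have hgOne := h.gOne_pos A lam
  refine Real.sSup_le ?_ (div_nonneg (Real.iSup_nonneg fun j => abs_nonneg _) hgOne.le)
  rintro _ ⟨μ, hμ, rfl⟩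
  rw [gammaHat, le_div_iff₀ hgOne, h.gOne_eq_sum_gradL]
  simpa [hμ, gInf] using iInf_neg_mulVec_mul_sum_le A (h.gradL_nonneg A lam) μ

lemma MemL.sum_deriv_mul_of_sum_gradL_mul [NeZero m] (h : MemL ℓ) {lam : Fin n → ℝ}
    {w : Fin m → ℝ} (hw : ∑ i, gradL ℓ A lam i * w i = -gInf ℓ A lam) :
    ∑ i, deriv ℓ (A.mulVec lam i) * w i =
      -(gammaHat ℓ A lam * ∑ i, deriv ℓ (A.mulVec lam i)) := by
  have hm : (m : ℝ) ≠ 0 := Nat.cast_ne_zero.2 (NeZero.ne m)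
  have hderiv (i : Fin m) : deriv ℓ (A.mulVec lam i) = m * gradL ℓ A lam i :=
    (mul_div_cancel₀ _ hm).symm
  have hgInf : gInf ℓ A lam = gammaHat ℓ A lam * gOne ℓ A lam :=
    (div_mul_cancel₀ _ (h.gOne_pos A lam).ne').symm
  simp only [hderiv, mul_assoc, ← mul_sum, hw, hgInf, h.gOne_eq_sum_gradL]
  ring

lemma neZero_of_gammaMax_pos (hγ : 0 < gammaMax A) : NeZero m := by
  refine ⟨fun hm => hγ.not_ge (Real.sSup_nonpos ?_)⟩
  subst hm
  rintro _ ⟨-, -, rfl⟩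
  simp [Real.iInf_of_isEmpty]

lemma le_margin [NeZero m] {lam : Fin n → ℝ} {r : ℝ} (hlam : lam ≠ 0)
    (hr : ∀ i, r * ∑ j, |lam j| ≤ -A.mulVec lam i) : r ≤ margin A lam := by
  obtain ⟨j, hj⟩ := Function.ne_iff.1 hlam
  have hnorm : 0 < ∑ j, |lam j| :=
    sum_pos' (fun _ _ => abs_nonneg _) ⟨j, mem_univ j, abs_pos.2 hj⟩
  exact le_ciInf fun i => (le_div_iff₀ hnorm).2 (hr i)

end Risk

/-- The step size `α^qub = ν γ̂ / C⁴` at `lam`. -/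
def qubStep (ℓ : ℝ → ℝ) (A : Matrix (Fin m) (Fin n) ℝ) (ν : ℝ) (lam : Fin n → ℝ) : ℝ :=
  ν * (gammaHat ℓ A lam / Cstep ℓ A lam ^ 4)

/-- The rate `κ = ν (2 - ν) / (2 C⁶)` such that a step `qubStep` from `lam` shrinks the risk by
the factor `1 - κ γ̂²`. -/
def qubRate (ℓ : ℝ → ℝ) (A : Matrix (Fin m) (Fin n) ℝ) (ν : ℝ) (lam : Fin n → ℝ) : ℝ :=
  ν * (2 - ν) / (2 * Cstep ℓ A lam ^ 6)

/-- Steepest descent for the empirical risk in the `ℓ¹` geometry, with step sizes `qubStep`.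
The directions may be arbitrary points of the `ℓ¹` unit ball instead of signed basis vectors, and
`lam (k + 1)` is expressed through `lam k`, which avoids truncated subtraction. -/
structure IsQubSeq (ℓ : ℝ → ℝ) (A : Matrix (Fin m) (Fin n) ℝ) (ν : ℝ)
    (lam : ℕ → Fin n → ℝ) : Prop where
  zero : lam 0 = 0
  exists_step : ∀ k, ∃ v : Fin n → ℝ, ∑ j, |v j| ≤ 1 ∧
    ∑ i, gradL ℓ A (lam k) i * A.mulVec v i = -gInf ℓ A (lam k) ∧
    lam (k + 1) = lam k + qubStep ℓ A ν (lam k) • v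

section QubBoost

variable {ℓ : ℝ → ℝ} {A : Matrix (Fin m) (Fin n) ℝ} {ν : ℝ} {lam : ℕ → Fin n → ℝ} {t₀ t : ℕ}

lemma IsBoostSeq.isQubSeq {α : ℕ → ℝ} {v : ℕ → Fin n → ℝ} (h : IsBoostSeq ℓ A lam α v)
    (hα : ∀ i, 1 ≤ i → α i = qubStep ℓ A ν (lam (i - 1))) : IsQubSeq ℓ A ν lam := by
  obtain ⟨hzero, hstep, hbasis, hgrad⟩ := h
  refine ⟨hzero, fun k => ⟨v (k + 1), ?_, hgrad (k + 1) k.succ_pos, ?_⟩⟩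
  · obtain ⟨s, hs, j, hv⟩ := hbasis (k + 1) k.succ_pos
    have hs_abs : |s| = 1 := by rcases hs with rfl | rfl <;> simp
    simp [hv, hs_abs, Pi.single_apply, apply_ite abs]
  · rw [hstep (k + 1) k.succ_pos, hα (k + 1) k.succ_pos, Nat.add_sub_cancel]

lemma abs_qubStep_le (hL : MemL ℓ) (hν : 0 ≤ ν) {lam : Fin n → ℝ} (hg : 0 ≤ gammaHat ℓ A lam) :
    |qubStep ℓ A ν lam| ≤ ν * gammaHat ℓ A lam := by
  have hC := hL.cbound_cstep A lam
  rw [qubStep, abs_of_nonneg (mul_nonneg hν (div_nonneg hg (pow_nonneg hC.pos.le 4)))]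
  exact mul_le_mul_of_nonneg_left (div_le_self hg (one_le_pow₀ hC.1)) hν

lemma qubRate_pos (hL : MemL ℓ) (A : Matrix (Fin m) (Fin n) ℝ) (hν : ν ∈ Set.Ioo 0 2)
    (lam : Fin n → ℝ) : 0 < qubRate ℓ A ν lam := by
  have := (hL.cbound_cstep A lam).pos
  exact div_pos (mul_pos hν.1 (sub_pos.2 hν.2)) (by positivity)

lemma qubRate_le_qubRate [NeZero m] (hL : MemL ℓ) (hν : ν ∈ Set.Ioo 0 2) {lam μ : Fin n → ℝ}
    (hle : LL ℓ A μ ≤ LL ℓ A lam) : qubRate ℓ A ν lam ≤ qubRate ℓ A ν μ := by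
  have hC := (hL.cbound_cstep A μ).pos
  have hC_le := hL.cstep_le_cstep hle
  have := (mul_pos hν.1 (sub_pos.2 hν.2)).le
  unfold qubRate
  gcongr

namespace IsQubSeq

variable [NeZero m]

lemma ll_succ_le (h : IsQubSeq ℓ A ν lam) (hL : MemL ℓ) (hA : ∀ i j, |A i j| ≤ 1)
    (hν : ν ∈ Set.Ioo 0 2) (hγ : 0 < gammaMax A) (k : ℕ) :
    LL ℓ A (lam (k + 1)) ≤
      (1 - qubRate ℓ A ν (lam k) * gammaHat ℓ A (lam k) ^ 2) * LL ℓ A (lam k) := by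
  obtain ⟨v, hv, hgrad, hstep⟩ := h.exists_step k
  have hAv (i : Fin m) : |A.mulVec v i| ≤ 1 :=
    (abs_mulVec_le A (hA i) v).trans (by rwa [one_mul])
  have hsum := hL.sum_add_qub_step_le hAv
    ((natCast_mul_ll ℓ A (lam k)).symm.trans (hL.apply_invFun_ll A (lam k)).symm).le
    (hL.cbound_cstep A (lam k)) hν (hγ.trans_le (hL.gammaMax_le_gammaHat A (lam k)))
    (hL.sum_deriv_mul_of_sum_gradL_mul hgrad)
  have hnext (i : Fin m) : A.mulVec (lam (k + 1)) i =
      A.mulVec (lam k) i + qubStep ℓ A ν (lam k) * A.mulVec v i := by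
    simp [hstep, Matrix.mulVec_add, Matrix.mulVec_smul]
  rw [LL, LL, ← mul_div_assoc]
  gcongr
  simpa only [hnext, qubStep, qubRate] using hsum

lemma strictAnti_ll (h : IsQubSeq ℓ A ν lam) (hL : MemL ℓ) (hA : ∀ i j, |A i j| ≤ 1)
    (hν : ν ∈ Set.Ioo 0 2) (hγ : 0 < gammaMax A) : StrictAnti fun k => LL ℓ A (lam k) := by
  refine strictAnti_nat_of_succ_lt fun k => (h.ll_succ_le hL hA hν hγ k).trans_lt ?_
  have hdecr : 0 < qubRate ℓ A ν (lam k) * gammaHat ℓ A (lam k) ^ 2 :=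
    mul_pos (qubRate_pos hL A hν _) (pow_pos (hγ.trans_le (hL.gammaMax_le_gammaHat A _)) 2)
  exact mul_lt_of_lt_one_left (hL.ll_pos A _) (by linarith)

lemma ne_zero (h : IsQubSeq ℓ A ν lam) (hL : MemL ℓ) (hA : ∀ i j, |A i j| ≤ 1)
    (hν : ν ∈ Set.Ioo 0 2) (hγ : 0 < gammaMax A) (ht : 0 < t) : lam t ≠ 0 := fun hzero => by
  simpa [hzero, h.zero] using h.strictAnti_ll hL hA hν hγ ht

lemma ll_le_mul_exp (h : IsQubSeq ℓ A ν lam) (hL : MemL ℓ) (hA : ∀ i j, |A i j| ≤ 1)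
    (hν : ν ∈ Set.Ioo 0 2) (hγ : 0 < gammaMax A) (ht : t₀ ≤ t) :
    LL ℓ A (lam t) ≤ LL ℓ A (lam t₀) *
      exp (-(qubRate ℓ A ν (lam t₀) * ∑ k ∈ Ico t₀ t, gammaHat ℓ A (lam k) ^ 2)) := by
  rw [mul_sum]
  refine le_mul_exp_neg_sum (S := fun k => LL ℓ A (lam k)) (fun k => (hL.ll_pos A _).le)
    (fun k hk => (h.ll_succ_le hL hA hν hγ k).trans ?_) ht
  have hrate := qubRate_le_qubRate hL hν ((h.strictAnti_ll hL hA hν hγ).antitone hk)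
  have := (hL.ll_pos A (lam k)).le
  gcongr

lemma mulVec_nonpos (h : IsQubSeq ℓ A ν lam) (hL : MemL ℓ) (hA : ∀ i j, |A i j| ≤ 1)
    (hν : ν ∈ Set.Ioo 0 2) (hγ : 0 < gammaMax A)
    (ht : log m ≤ qubRate ℓ A ν (lam 0) * ∑ k ∈ range t, gammaHat ℓ A (lam k) ^ 2)
    (i : Fin m) : A.mulVec (lam t) i ≤ 0 := by
  have hm : (0 : ℝ) < m := Nat.cast_pos.2 (NeZero.pos m)
  have hdecay := h.ll_le_mul_exp hL hA hν hγ t.zero_le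
  rw [h.zero, ll_zero, ← h.zero, ← range_eq_Ico] at hdecay
  rw [← hL.strictMono.le_iff_le]
  calc ℓ (A.mulVec (lam t) i) ≤ m * LL ℓ A (lam t) := hL.apply_mulVec_le A _ i
    _ ≤ m * (ℓ 0 * exp (-log m)) := by
        have := (hL.1 0).le
        exact mul_le_mul_of_nonneg_left (hdecay.trans (by gcongr)) hm.le
    _ = ℓ 0 := by rw [exp_neg, exp_log hm]; field_simp

lemma sub_log_le_neg_mulVec (h : IsQubSeq ℓ A ν lam) (hL : MemL ℓ) (hA : ∀ i j, |A i j| ≤ 1)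
    (hν : ν ∈ Set.Ioo 0 2) (hγ : 0 < gammaMax A) (ht : t₀ ≤ t) (i : Fin m) :
    qubRate ℓ A ν (lam t₀) * ∑ k ∈ range t, gammaHat ℓ A (lam k) ^ 2 -
      log (max 1 (m * Cstep ℓ A (lam t₀) * LL ℓ A (lam t₀) *
        exp (qubRate ℓ A ν (lam t₀) * ∑ k ∈ range t₀, gammaHat ℓ A (lam k) ^ 2))) ≤
      -A.mulVec (lam t) i := by
  set B := m * Cstep ℓ A (lam t₀) * LL ℓ A (lam t₀)
  set κ := qubRate ℓ A ν (lam t₀)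
  have hm : (0 : ℝ) < m := Nat.cast_pos.2 (NeZero.pos m)
  have hC := (hL.cbound_cstep A (lam t₀)).pos
  have hB : 0 < B := mul_pos (mul_pos hm hC) (hL.ll_pos A _)
  have hexp : exp (A.mulVec (lam t) i) ≤
      B * exp (-(κ * ∑ k ∈ Ico t₀ t, gammaHat ℓ A (lam k) ^ 2)) :=
    calc exp (A.mulVec (lam t) i) ≤ m * Cstep ℓ A (lam t₀) * LL ℓ A (lam t) :=
          hL.exp_mulVec_le ((h.strictAnti_ll hL hA hν hγ).antitone ht) i
      _ ≤ m * Cstep ℓ A (lam t₀) * _ := by gcongr; exact h.ll_le_mul_exp hL hA hν hγ ht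
      _ = _ := (mul_assoc ..).symm
  have hlog := log_le_log (exp_pos _) hexp
  rw [log_exp, log_mul hB.ne' (exp_pos _).ne', log_exp] at hlog
  refine (sub_le_sub_left (log_le_log (mul_pos hB (exp_pos _)) (le_max_right _ _)) _).trans ?_
  rw [log_mul hB.ne' (exp_pos _).ne', log_exp, ← sum_range_add_sum_Ico _ ht]
  linarith

lemma sum_abs_le (h : IsQubSeq ℓ A ν lam) (hL : MemL ℓ) (hν : 0 ≤ ν) (hγ : 0 ≤ gammaMax A)
    (t : ℕ) : ∑ j, |lam t j| ≤ ν * ∑ k ∈ range t, gammaHat ℓ A (lam k) := by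
  induction t with
  | zero => simp [h.zero]
  | succ t ih =>
    obtain ⟨v, hv, -, hstep⟩ := h.exists_step t
    have hα := abs_qubStep_le hL hν (hγ.trans (hL.gammaMax_le_gammaHat A (lam t)))
    calc ∑ j, |lam (t + 1) j| ≤ ∑ j, (|lam t j| + |qubStep ℓ A ν (lam t)| * |v j|) :=
          sum_le_sum fun j _ => by
            rw [hstep, ← abs_mul]
            exact abs_add_le _ _
      _ = ∑ j, |lam t j| + |qubStep ℓ A ν (lam t)| * ∑ j, |v j| := by
          rw [sum_add_distrib, mul_sum]
      _ ≤ ν * ∑ k ∈ range t, gammaHat ℓ A (lam k) + ν * gammaHat ℓ A (lam t) :=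
          add_le_add ih ((mul_le_of_le_one_right (abs_nonneg _) hv).trans hα)
      _ = ν * ∑ k ∈ range (t + 1), gammaHat ℓ A (lam k) := by rw [sum_range_succ, mul_add]

end IsQubSeq

lemma le_qubRate_mul_sum_sq [NeZero m] (hL : MemL ℓ) (hν : ν ∈ Set.Ioo 0 2)
    (hγ : 0 < gammaMax A) {μ : Fin n → ℝ} {b : ℝ}
    (ht : 2 * Cstep ℓ A μ ^ 6 * b / (gammaMax A ^ 2 * ν * (2 - ν)) ≤ t) :
    b ≤ qubRate ℓ A ν μ * ∑ k ∈ range t, gammaHat ℓ A (lam k) ^ 2 := by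
  have hν₀ := hν.1
  have hν₂ := sub_pos.2 hν.2
  have hC := (hL.cbound_cstep A μ).pos
  calc b = qubRate ℓ A ν μ *
        (2 * Cstep ℓ A μ ^ 6 * b / (gammaMax A ^ 2 * ν * (2 - ν)) * gammaMax A ^ 2) := by
        rw [qubRate]; field_simp
    _ ≤ qubRate ℓ A ν μ * (t * gammaMax A ^ 2) :=
        mul_le_mul_of_nonneg_left (by gcongr) (qubRate_pos hL A hν μ).le
    _ ≤ qubRate ℓ A ν μ * ∑ k ∈ range t, gammaHat ℓ A (lam k) ^ 2 := by
        refine mul_le_mul_of_nonneg_left ?_ (qubRate_pos hL A hν μ).le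
        simpa using card_nsmul_le_sum (range t) _ (gammaMax A ^ 2) fun k _ =>
          pow_le_pow_left₀ hγ.le (hL.gammaMax_le_gammaHat A (lam k)) 2

end QubBoost

theorem margin_qub_general {A : Matrix (Fin m) (Fin n) ℝ} (hA : ∀ i j, |A i j| ≤ 1)
    {ℓ : ℝ → ℝ} (hL : MemL ℓ) {ν : ℝ} (hν : ν ∈ Set.Ioo 0 2) (hγ : 0 < gammaMax A)
    {lam : ℕ → Fin n → ℝ} (h : IsQubSeq ℓ A ν lam) {t₀ t : ℕ} (ht₀ : t₀ ≤ t) (ht : 0 < t)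
    (htlb : 2 * Cstep ℓ A (lam 0) ^ 6 * log m / (gammaMax A ^ 2 * ν * (2 - ν)) ≤ t) :
    gammaMax A * ((2 - ν) / (2 * Cstep ℓ A (lam t₀) ^ 6)) -
      log (max 1 (m * Cstep ℓ A (lam t₀) * LL ℓ A (lam t₀) *
        exp (qubRate ℓ A ν (lam t₀) * ∑ k ∈ range t₀, gammaHat ℓ A (lam k) ^ 2))) /
      (t * ν * gammaMax A) ≤ margin A (lam t) := by
  have : NeZero m := neZero_of_gammaMax_pos hγ
  have hrate : (2 - ν) / (2 * Cstep ℓ A (lam t₀) ^ 6) = qubRate ℓ A ν (lam t₀) / ν := by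
    rw [qubRate, mul_div_assoc, mul_div_cancel_left₀ _ hν.1.ne']
  refine le_margin (h.ne_zero hL hA hν hγ ht) fun i => ?_
  rw [hrate]
  set c₀ := m * Cstep ℓ A (lam t₀) * LL ℓ A (lam t₀) * _
  set r := gammaMax A * (qubRate ℓ A ν (lam t₀) / ν) - log (max 1 c₀) / (t * ν * gammaMax A)
  rcases le_or_gt r 0 with hr | hr
  · have hsep := h.mulVec_nonpos hL hA hν hγ (le_qubRate_mul_sum_sq hL hν hγ htlb) i
    exact (mul_nonpos_of_nonpos_of_nonneg hr (sum_nonneg fun j _ => abs_nonneg _)).trans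
      (neg_nonneg.2 hsep)
  · have hbound := mul_le_mul_sum_sq_sub (nonempty_range_iff.2 ht.ne')
      (fun k _ => hL.gammaMax_le_gammaHat A (lam k)) hγ (qubRate_pos hL A hν (lam t₀)).le hν.1
      (log_nonneg (le_max_left 1 c₀)) (h.sum_abs_le hL hν.1.le hγ.le t)
      (by simpa only [card_range] using hr.le)
    rw [card_range] at hbound
    exact hbound.trans (h.sub_log_le_neg_mulVec hL hA hν hγ ht₀ i)

/-- margin lower bound for quadratic-upper-bound steps. -/
theorem margin_qub {m n : ℕ} (hm : 0 < m) (hn : 0 < n)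
    (A : Matrix (Fin m) (Fin n) ℝ) (hA : ∀ i j, |A i j| ≤ 1)
    (ℓ : ℝ → ℝ) (hℓ : MemLinf ℓ)
    (ν : ℝ) (hν : ν ∈ Set.Ioc (0:ℝ) 1)
    (hγ : 0 < gammaMax A)
    (lam : ℕ → Fin n → ℝ) (α : ℕ → ℝ) (v : ℕ → Fin n → ℝ)
    (hseq : IsBoostSeq ℓ A lam α v)
    (hstep : ∀ i : ℕ, 1 ≤ i →
      α i = ν * (gammaHat ℓ A (lam (i-1)) / (Cstep ℓ A (lam (i-1)))^4))
    (t₀ t : ℕ) (ht : t₀ < t)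
    (htlb : 2 * (Cstep ℓ A (lam 0))^6 * Real.log m / ((gammaMax A)^2 * ν * (2-ν)) ≤ (t:ℝ)) :
    margin A (lam t) ≥
      gammaMax A * ((2-ν) / (2 * (Cstep ℓ A (lam t₀))^6)) -
      Real.log (max 1
          ((m:ℝ) * Cstep ℓ A (lam t₀) * LL ℓ A (lam t₀) *
            Real.exp ((ν * (2-ν) / (2 * (Cstep ℓ A (lam t₀))^6)) *
              ∑ i ∈ Finset.Icc 1 t₀, (gammaHat ℓ A (lam (i-1)))^2))) /
        ((t:ℝ) * ν * gammaMax A) := by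
  rw [sum_Icc_one_sub_one fun k => gammaHat ℓ A (lam k) ^ 2]
  exact margin_qub_general hA hℓ.1 ⟨hν.1, hν.2.trans_lt one_lt_two⟩ hγ (hseq.isQubSeq hstep)
    ht.le (t₀.zero_le.trans_lt ht) htlb
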